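/- arXiv:1609.00966 — 2 statements merged into one kernel-verified Lean document; each statement's English description precedes it below -/
import Mathlib

section
/- Assume in addition that D is invertible. Then the operator S⁻¹ − Q₋* 𝔔 (𝔔 + b·Q*Q)⁻¹ 𝔔 Q₋ on H₋ is invertible and its inverse equals Š; equivalently, Š⁻¹ = S⁻¹ − Q₋* 𝔔 (𝔔 + b·Q*Q)⁻¹ 𝔔 Q₋, where S = (D + Q₋*𝔔Q₋)⁻¹ and Š = (D + Q̌₋*𝔔̌Q̌₋)⁻¹. -/
open RealInnerProductSpace

theorem aux_inverse_inverse {R : Type*} [Ring R] {a : R} (h : IsUnit a) :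
    Ring.inverse (Ring.inverse a) = a := by
  obtain ⟨u, rfl⟩ := h
  rw [Ring.inverse_unit, Ring.inverse_unit, inv_inv]

theorem aux_isUnit {H : Type*} [NormedAddCommGroup H] [InnerProductSpace ℝ H]
    [FiniteDimensional ℝ H] (A : Module.End ℝ H)
    (hA : ∀ x : H, x ≠ 0 → 0 < ⟪A x, x⟫) : IsUnit A := by
  rw [LinearMap.isUnit_iff_ker_eq_bot, LinearMap.ker_eq_bot']
  intro x hx
  by_contra h
  have := hA x h
  simp [hx] at this

theorem aux_right {H : Type*} [AddCommGroup H] [Module ℝ H] (A : Module.End ℝ H)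
    (hA : IsUnit A) (x : H) : A (Ring.inverse A x) = x := by
  have := LinearMap.congr_fun (Ring.mul_inverse_cancel A hA) x
  simpa using this

theorem aux_left {H : Type*} [AddCommGroup H] [Module ℝ H] (A : Module.End ℝ H)
    (hA : IsUnit A) (x : H) : Ring.inverse A (A x) = x := by
  have := LinearMap.congr_fun (Ring.inverse_mul_cancel A hA) x
  simpa using this

/-- Remark, part (c), first representation:
`Š⁻¹ = S⁻¹ - Q₋* 𝔔 (𝔔 + b Q*Q)⁻¹ 𝔔 Q₋`, i.e. `S⁻¹ - Q₋* 𝔔 (𝔔 + b Q*Q)⁻¹ 𝔔 Q₋`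
is invertible with inverse `Š`. -/
theorem stmt_14
    {Hm H Hp : Type*}
    [NormedAddCommGroup Hm] [InnerProductSpace ℝ Hm] [FiniteDimensional ℝ Hm]
    [NormedAddCommGroup H] [InnerProductSpace ℝ H] [FiniteDimensional ℝ H]
    [NormedAddCommGroup Hp] [InnerProductSpace ℝ Hp] [FiniteDimensional ℝ Hp]
    (Qm : Hm →ₗ[ℝ] H) (Q : H →ₗ[ℝ] Hp)
    (b : ℝ) (hb : 0 < b)
    (Qf : Module.End ℝ H) (hQfsym : Qf.IsSymmetric)
    (hQfpos : ∀ x : H, x ≠ 0 → 0 < ⟪Qf x, x⟫)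
    (Qfc : Module.End ℝ Hp)
    (hQfc : Qfc = Ring.inverse
      (b⁻¹ • (1 : Module.End ℝ Hp)
        + Q ∘ₗ Ring.inverse Qf ∘ₗ LinearMap.adjoint Q))
    (D : Module.End ℝ Hm)
    (hDQ : IsUnit (D + LinearMap.adjoint Qm ∘ₗ Qf ∘ₗ Qm))
    (hDQc : IsUnit (D + LinearMap.adjoint (Q ∘ₗ Qm) ∘ₗ Qfc ∘ₗ (Q ∘ₗ Qm)))
    (S : Module.End ℝ Hm)
    (hS : S = Ring.inverse (D + LinearMap.adjoint Qm ∘ₗ Qf ∘ₗ Qm))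
    (Sc : Module.End ℝ Hm)
    (hSc : Sc = Ring.inverse (D + LinearMap.adjoint (Q ∘ₗ Qm) ∘ₗ Qfc ∘ₗ (Q ∘ₗ Qm)))
    (hD : IsUnit D) :
    IsUnit (Ring.inverse S
        - LinearMap.adjoint Qm ∘ₗ Qf
            ∘ₗ Ring.inverse (Qf + b • (LinearMap.adjoint Q ∘ₗ Q))
            ∘ₗ Qf ∘ₗ Qm) ∧
    Ring.inverse (Ring.inverse S
        - LinearMap.adjoint Qm ∘ₗ Qf
            ∘ₗ Ring.inverse (Qf + b • (LinearMap.adjoint Q ∘ₗ Q))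
            ∘ₗ Qf ∘ₗ Qm)
      = Sc ∧
    Ring.inverse Sc
      = Ring.inverse S
        - LinearMap.adjoint Qm ∘ₗ Qf
            ∘ₗ Ring.inverse (Qf + b • (LinearMap.adjoint Q ∘ₗ Q))
            ∘ₗ Qf ∘ₗ Qm := by
  have hQu : IsUnit Qf := aux_isUnit Qf hQfpos
  have hnn : ∀ x : H, 0 ≤ ⟪Qf x, x⟫ := by
    intro x
    by_cases h : x = 0
    · simp [h]
    · exact (hQfpos x h).le
  have hM : IsUnit (Qf + b • (LinearMap.adjoint Q ∘ₗ Q)) := by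
    apply aux_isUnit
    intro x hx
    have h1 := hQfpos x hx
    have h2 : 0 ≤ b * ⟪Q x, Q x⟫ := mul_nonneg hb.le real_inner_self_nonneg
    simp only [LinearMap.add_apply, LinearMap.smul_apply, LinearMap.comp_apply, inner_add_left,
      real_inner_smul_left, LinearMap.adjoint_inner_left]
    linarith
  have hN : IsUnit (b⁻¹ • (1 : Module.End ℝ Hp)
        + Q ∘ₗ Ring.inverse Qf ∘ₗ LinearMap.adjoint Q) := by
    apply aux_isUnit
    intro x hx
    have h1 : 0 < b⁻¹ * ⟪x, x⟫ := mul_pos (inv_pos.2 hb) (real_inner_self_pos.2 hx)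
    have h2 := hnn (Ring.inverse Qf (LinearMap.adjoint Q x))
    rw [aux_right Qf hQu, real_inner_comm, LinearMap.adjoint_inner_right] at h2
    simp only [LinearMap.add_apply, LinearMap.smul_apply, LinearMap.comp_apply, inner_add_left,
      real_inner_smul_left, Module.End.one_apply]
    linarith
  have key : ∀ x : H, LinearMap.adjoint Q (Qfc (Q x)) = Qf x
      - Qf (Ring.inverse (Qf + b • (LinearMap.adjoint Q ∘ₗ Q)) (Qf x)) := by
    intro x
    have hy := aux_right _ hM (Qf x)
    generalize Ring.inverse (Qf + b • (LinearMap.adjoint Q ∘ₗ Q)) (Qf x) = y at hy ⊢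
    simp only [LinearMap.add_apply, LinearMap.smul_apply, LinearMap.comp_apply] at hy
    have hy' : b • LinearMap.adjoint Q (Q y) = Qf x - Qf y := by
      rw [← hy]; abel
    have h3 : (b⁻¹ • (1 : Module.End ℝ Hp)
        + Q ∘ₗ Ring.inverse Qf ∘ₗ LinearMap.adjoint Q) (b • Q y) = Q x := by
      simp only [LinearMap.add_apply, LinearMap.smul_apply, LinearMap.comp_apply,
        Module.End.one_apply]
      rw [map_smul (LinearMap.adjoint Q), hy', map_sub, aux_left Qf hQu, aux_left Qf hQu,
        inv_smul_smul₀ hb.ne', map_sub]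
      abel
    rw [← h3, hQfc, aux_left _ hN, map_smul, hy']
  have main : Ring.inverse S
        - LinearMap.adjoint Qm ∘ₗ Qf
            ∘ₗ Ring.inverse (Qf + b • (LinearMap.adjoint Q ∘ₗ Q))
            ∘ₗ Qf ∘ₗ Qm
      = D + LinearMap.adjoint (Q ∘ₗ Qm) ∘ₗ Qfc ∘ₗ (Q ∘ₗ Qm) := by
    rw [hS, aux_inverse_inverse hDQ, LinearMap.adjoint_comp]
    ext x
    simp only [LinearMap.add_apply, LinearMap.sub_apply, LinearMap.comp_apply, key, map_sub]
    abel
  rw [main]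
  refine ⟨hDQc, hSc.symm, ?_⟩
  rw [hSc, aux_inverse_inverse hDQc]
end

section
/- One has the operator identity from H₊ to H₋: Q̌₋* 𝔔̌ = b·Q₋* 𝔔 (b·Q*Q + 𝔔)⁻¹ Q*, where 𝔔̌ = ((1/b)·id_{H₊} + Q 𝔔⁻¹ Q*)⁻¹ and Q̌₋ = Q ∘ Q₋. -/
open RealInnerProductSpace

theorem isUnit_of_pos_aux {E : Type*} [NormedAddCommGroup E] [InnerProductSpace ℝ E]
    [FiniteDimensional ℝ E] (T : Module.End ℝ E)
    (h : ∀ x : E, x ≠ 0 → 0 < ⟪T x, x⟫) : IsUnit T := by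
  rw [LinearMap.isUnit_iff_ker_eq_bot, LinearMap.ker_eq_bot']
  intro x hx
  by_contra hne
  have := h x hne
  rw [hx, inner_zero_left] at this
  exact lt_irrefl _ this

/-- Identity `Q̌₋* 𝔔̌ = b Q₋* 𝔔 (b Q*Q + 𝔔)⁻¹ Q*` from `H₊` to `H₋`. -/
theorem stmt_17
    {Hm H Hp : Type*}
    [NormedAddCommGroup Hm] [InnerProductSpace ℝ Hm] [FiniteDimensional ℝ Hm]
    [NormedAddCommGroup H] [InnerProductSpace ℝ H] [FiniteDimensional ℝ H]
    [NormedAddCommGroup Hp] [InnerProductSpace ℝ Hp] [FiniteDimensional ℝ Hp]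
    (Qm : Hm →ₗ[ℝ] H) (Q : H →ₗ[ℝ] Hp)
    (b : ℝ) (hb : 0 < b)
    (Qf : Module.End ℝ H) (hQfsym : Qf.IsSymmetric)
    (hQfpos : ∀ x : H, x ≠ 0 → 0 < ⟪Qf x, x⟫)
    (Qfc : Module.End ℝ Hp)
    (hQfc : Qfc = Ring.inverse
      (b⁻¹ • (1 : Module.End ℝ Hp)
        + Q ∘ₗ Ring.inverse Qf ∘ₗ LinearMap.adjoint Q)) :
    LinearMap.adjoint (Q ∘ₗ Qm) ∘ₗ Qfc
      = b • (LinearMap.adjoint Qm ∘ₗ Qf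
          ∘ₗ Ring.inverse (b • (LinearMap.adjoint Q ∘ₗ Q) + Qf)
          ∘ₗ LinearMap.adjoint Q) := by
  have u1 : IsUnit Qf := isUnit_of_pos_aux Qf hQfpos
  have nn : ∀ x : H, 0 ≤ ⟪Qf x, x⟫ := by
    intro x
    by_cases hx : x = 0
    · simp [hx]
    · exact (hQfpos x hx).le
  have r1 : ∀ x, Qf (Ring.inverse Qf x) = x := fun x => by
    have := LinearMap.congr_fun (Ring.mul_inverse_cancel _ u1) x
    simpa using this
  have u2 : IsUnit (b • (LinearMap.adjoint Q ∘ₗ Q) + Qf) := by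
    apply isUnit_of_pos_aux
    intro x hx
    have h1 := hQfpos x hx
    have h2 : 0 ≤ b * ⟪Q x, Q x⟫ := mul_nonneg hb.le real_inner_self_nonneg
    simp only [LinearMap.add_apply, LinearMap.smul_apply, LinearMap.comp_apply, inner_add_left,
      real_inner_smul_left, LinearMap.adjoint_inner_left]
    linarith
  have u3 : IsUnit (b⁻¹ • (1 : Module.End ℝ Hp)
        + Q ∘ₗ Ring.inverse Qf ∘ₗ LinearMap.adjoint Q) := by
    apply isUnit_of_pos_aux
    intro x hx
    have h1 : 0 < b⁻¹ * ⟪x, x⟫ := mul_pos (inv_pos.2 hb) (real_inner_self_pos.2 hx)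
    have h2 := nn (Ring.inverse Qf (LinearMap.adjoint Q x))
    rw [r1, real_inner_comm] at h2
    simp only [LinearMap.add_apply, LinearMap.smul_apply, LinearMap.comp_apply, inner_add_left,
      real_inner_smul_left, Module.End.one_apply, ← LinearMap.adjoint_inner_right Q]
    linarith
  ext y
  have hy : b⁻¹ • Qfc y + Q (Ring.inverse Qf (LinearMap.adjoint Q (Qfc y))) = y := by
    have := LinearMap.congr_fun (Ring.mul_inverse_cancel _ u3) y
    rw [← hQfc] at this
    simpa using this
  set x := Qfc y with hx
  set z := Ring.inverse Qf (LinearMap.adjoint Q x) with hz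
  have hQz : Qf z = LinearMap.adjoint Q x := r1 _
  have key : (b • (LinearMap.adjoint Q ∘ₗ Q) + Qf) (b⁻¹ • z) = LinearMap.adjoint Q y := by
    rw [← hy]
    simp only [LinearMap.add_apply, LinearMap.smul_apply, LinearMap.comp_apply, map_add, map_smul,
      hQz]
    rw [add_comm, smul_add, smul_smul, inv_mul_cancel₀ hb.ne', one_smul]
  have inv : Ring.inverse (b • (LinearMap.adjoint Q ∘ₗ Q) + Qf) (LinearMap.adjoint Q y)
      = b⁻¹ • z := by
    rw [← key]
    exact LinearMap.congr_fun (Ring.inverse_mul_cancel _ u2) (b⁻¹ • z)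
  simp only [LinearMap.adjoint_comp, LinearMap.comp_apply, LinearMap.smul_apply]
  rw [inv, map_smul, map_smul, hQz, smul_smul, mul_inv_cancel₀ hb.ne', one_smul]
end
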